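/- arXiv:1810.02839 — 2 statements merged into one kernel-verified Lean document; each statement's English description precedes it below -/
import Mathlib

section
/- For every set S of n points in the plane in convex position and any two trees T, T' ∈ 𝒯(S), the tree T can be transformed into T' by a sequence of at most 2n − 5 edge slides. -/
open scoped Classical

noncomputable section

/-- Points in the plane. -/
abbrev Pt : Type := ℝ × ℝ

/-- The closed straight-line segment spanned by an (unordered) edge. -/
def segOf (e : Sym2 Pt) : Set Pt :=
  Sym2.lift ⟨fun p q => segment ℝ p q, fun p q => segment_symm ℝ p q⟩ e

/-- The set of endpoints of an edge. -/
def epts (e : Sym2 Pt) : Set Pt := {p | p ∈ e}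

/-- Two edges intersect in at most common endpoints (they do not cross). -/
def NoCrossPair (e f : Sym2 Pt) : Prop := segOf e ∩ segOf f ⊆ epts e ∩ epts f

/-- A set of edges is noncrossing: any two distinct edges meet in at most a common endpoint. -/
def NoCross (E : Finset (Sym2 Pt)) : Prop := ∀ e ∈ E, ∀ f ∈ E, e ≠ f → NoCrossPair e f

/-- `E` is the edge set of a noncrossing straight-line spanning tree on the point set `S`:
all edges are nondegenerate with endpoints in `S`, pairwise noncrossing, there are
`|S| - 1` of them, and they connect all of `S`. -/
def IsPST (S : Finset Pt) (E : Finset (Sym2 Pt)) : Prop :=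
  (∀ e ∈ E, ¬ e.IsDiag ∧ ∀ p ∈ e, p ∈ S) ∧
  NoCross E ∧ E.card + 1 = S.card ∧
  ∀ p ∈ S, ∀ q ∈ S, Relation.ReflTransGen (fun a b => s(a, b) ∈ E) p q

/-- `S` is in general position: no three of its points are collinear. -/
def GenPos (S : Finset Pt) : Prop :=
  ∀ p ∈ S, ∀ q ∈ S, ∀ r ∈ S, p ≠ q → p ≠ r → q ≠ r → ¬ Collinear ℝ ({p, q, r} : Set Pt)

/-- `S` is in convex position: every point of `S` is a vertex of the convex hull of `S`. -/
def ConvexPos (S : Finset Pt) : Prop :=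
  ∀ p ∈ S, p ∉ convexHull ℝ ((S : Set Pt) \ {p})

/-- The open interior of the triangle with vertices `p`, `q`, `r`. -/
def triInt (p q r : Pt) : Set Pt := interior (convexHull ℝ ({p, q, r} : Set Pt))

/-- `y` can be reached from `x` by a sequence of at most `m` `step`-operations. -/
def ReachesIn {α : Type*} (step : α → α → Prop) (m : ℕ) (x y : α) : Prop :=
  ∃ k ≤ m, ∃ f : ℕ → α, f 0 = x ∧ f k = y ∧ ∀ i < k, step (f i) (f (i + 1))

/-- A simultaneous rotation from `E₁` to `E₂`: a bijection `π` between the removed and the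
inserted edges such that each `e` shares an endpoint with `π e` and `π e` crosses no edge
of `E₁`. -/
def SimRotation (S : Finset Pt) (E₁ E₂ : Finset (Sym2 Pt)) : Prop :=
  IsPST S E₁ ∧ IsPST S E₂ ∧ ∃ π : Sym2 Pt → Sym2 Pt,
    Set.BijOn π ↑(E₁ \ E₂) ↑(E₂ \ E₁) ∧
    ∀ e ∈ E₁ \ E₂, (∃ p, p ∈ e ∧ p ∈ π e) ∧ ∀ f ∈ E₁, NoCrossPair (π e) f

/-- An empty-triangle rotation replaces an edge `pq` by an adjacent edge `pr` such that
no edge of either tree meets the interior of the triangle `pqr`. -/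
def EmptyTriRot (S : Finset Pt) (E₁ E₂ : Finset (Sym2 Pt)) : Prop :=
  IsPST S E₁ ∧ IsPST S E₂ ∧ ∃ p q r : Pt,
    E₁ \ E₂ = {s(p, q)} ∧ E₂ \ E₁ = {s(p, r)} ∧
    ∀ g ∈ E₁ ∪ E₂, Disjoint (segOf g) (triInt p q r)

/-- A simultaneous empty-triangle rotation. -/
def SimEmptyTriRot (S : Finset Pt) (E₁ E₂ : Finset (Sym2 Pt)) : Prop :=
  IsPST S E₁ ∧ IsPST S E₂ ∧ ∃ π : Sym2 Pt → Sym2 Pt,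
    Set.BijOn π ↑(E₁ \ E₂) ↑(E₂ \ E₁) ∧
    ∀ e ∈ E₁ \ E₂, ∃ p q r : Pt, e = s(p, q) ∧ π e = s(p, r) ∧
      ∀ g ∈ E₁ ∪ E₂, Disjoint (segOf g) (triInt p q r)

/-- An edge slide replaces `pq` by `pr`, where `qr` is an edge of both trees and no edge of
either tree meets the interior of the triangle `pqr`. -/
def EdgeSlide (S : Finset Pt) (E₁ E₂ : Finset (Sym2 Pt)) : Prop :=
  IsPST S E₁ ∧ IsPST S E₂ ∧ ∃ p q r : Pt,
    E₁ \ E₂ = {s(p, q)} ∧ E₂ \ E₁ = {s(p, r)} ∧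
    s(q, r) ∈ E₁ ∧ s(q, r) ∈ E₂ ∧
    ∀ g ∈ E₁ ∪ E₂, Disjoint (segOf g) (triInt p q r)

/-- A simultaneous edge slide. -/
def SimEdgeSlide (S : Finset Pt) (E₁ E₂ : Finset (Sym2 Pt)) : Prop :=
  IsPST S E₁ ∧ IsPST S E₂ ∧ ∃ π : Sym2 Pt → Sym2 Pt,
    Set.BijOn π ↑(E₁ \ E₂) ↑(E₂ \ E₁) ∧
    ∀ e ∈ E₁ \ E₂, ∃ p q r : Pt, e = s(p, q) ∧ π e = s(p, r) ∧
      s(q, r) ∈ E₁ ∧ s(q, r) ∈ E₂ ∧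
      ∀ g ∈ E₁ ∪ E₂, Disjoint (segOf g) (triInt p q r)

/-- `e` is an edge of the convex hull of `S`: it joins two distinct points of `S` and its
segment lies on the boundary of the convex hull of `S`. -/
def IsHullEdge (S : Finset Pt) (e : Sym2 Pt) : Prop :=
  ∃ u v : Pt, e = s(u, v) ∧ u ∈ S ∧ v ∈ S ∧ u ≠ v ∧
    segment ℝ u v ⊆ frontier (convexHull ℝ (S : Set Pt))

/-- The spanning star centered at `v`. -/
def starAt (S : Finset Pt) (v : Pt) : Finset (Sym2 Pt) := (S.erase v).image (fun w => s(v, w))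

/-- An edge-labeled tree: an edge set together with a labeling function. -/
abbrev LTree := Finset (Sym2 Pt) × (Sym2 Pt → ℕ)

/-- `T` is an edge-labeled noncrossing straight-line spanning tree on `S`: its edge set is in
`𝒯(S)` and its labeling is a bijection from the edges onto `{1, …, |S| - 1}`
(normalized to `0` on non-edges). -/
def IsLabeledPST (S : Finset Pt) (T : LTree) : Prop :=
  IsPST S T.1 ∧ Set.BijOn T.2 ↑T.1 (Set.Icc 1 (S.card - 1)) ∧ ∀ e, e ∉ T.1 → T.2 e = 0

/-- A simultaneous exchange on edge-labeled trees: an arbitrary bijection between removed and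
inserted edges transferring labels, all common edges keeping their labels. -/
def LabSimExchange (S : Finset Pt) (T₁ T₂ : LTree) : Prop :=
  IsLabeledPST S T₁ ∧ IsLabeledPST S T₂ ∧ ∃ π : Sym2 Pt → Sym2 Pt,
    Set.BijOn π ↑(T₁.1 \ T₂.1) ↑(T₂.1 \ T₁.1) ∧
    (∀ e ∈ T₁.1 \ T₂.1, T₂.2 (π e) = T₁.2 e) ∧
    ∀ e ∈ T₁.1 ∩ T₂.1, T₂.2 e = T₁.2 e

/-- A rotation on edge-labeled trees: the removed and inserted edges share an endpoint and do
not cross, the label of the removed edge is transferred, and all other labels are kept. -/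
def LabRotation (S : Finset Pt) (T₁ T₂ : LTree) : Prop :=
  IsLabeledPST S T₁ ∧ IsLabeledPST S T₂ ∧ ∃ e₁ e₂ : Sym2 Pt,
    T₁.1 \ T₂.1 = {e₁} ∧ T₂.1 \ T₁.1 = {e₂} ∧
    (∃ p, p ∈ e₁ ∧ p ∈ e₂) ∧ NoCrossPair e₁ e₂ ∧
    T₂.2 e₂ = T₁.2 e₁ ∧ ∀ e ∈ T₁.1 ∩ T₂.1, T₂.2 e = T₁.2 e

/-- An edge slide on edge-labeled trees, transferring the label of the slid edge. -/
def LabEdgeSlide (S : Finset Pt) (T₁ T₂ : LTree) : Prop :=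
  IsLabeledPST S T₁ ∧ IsLabeledPST S T₂ ∧ ∃ p q r : Pt,
    T₁.1 \ T₂.1 = {s(p, q)} ∧ T₂.1 \ T₁.1 = {s(p, r)} ∧
    s(q, r) ∈ T₁.1 ∧ s(q, r) ∈ T₂.1 ∧
    (∀ g ∈ T₁.1 ∪ T₂.1, Disjoint (segOf g) (triInt p q r)) ∧
    T₂.2 (s(p, r)) = T₁.2 (s(p, q)) ∧ ∀ e ∈ T₁.1 ∩ T₂.1, T₂.2 e = T₁.2 e


section Helpers

lemma reachesIn_refl {α : Type*} {step : α → α → Prop} (m : ℕ) (x : α) :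
    ReachesIn step m x x :=
  ⟨0, Nat.zero_le _, fun _ => x, rfl, rfl, fun i hi => absurd hi (Nat.not_lt_zero _)⟩

lemma reachesIn_cons {α : Type*} {step : α → α → Prop} {m : ℕ} {x y z : α}
    (h : step x y) (hr : ReachesIn step m y z) : ReachesIn step (m + 1) x z := by
  obtain ⟨k, hk, f, h0, h1, h2⟩ := hr
  refine ⟨k + 1, by omega, fun i => Nat.casesOn i x f, rfl, h1, ?_⟩
  intro i hi
  cases i with
  | zero => simpa [h0] using h
  | succ j => exact h2 j (by omega)

lemma reachesIn_trans {α : Type*} {step : α → α → Prop} {m m' : ℕ} {x y z : α}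
    (h : ReachesIn step m x y) (hr : ReachesIn step m' y z) :
    ReachesIn step (m + m') x z := by
  obtain ⟨k, hk, f, h0, h1, h2⟩ := h
  obtain ⟨l, hl, g, g0, g1, g2⟩ := hr
  refine ⟨k + l, by omega, fun i => if i < k then f i else g (i - k), ?_, ?_, ?_⟩
  · by_cases hk0 : 0 < k
    · simp [hk0, h0]
    · have : k = 0 := by omega
      subst this
      simp [g0, ← h1, h0]
  · simp [g1]
  · intro i hi
    by_cases h3 : i + 1 < k
    · have : i < k := by omega
      simpa [h3, this] using h2 i this
    · by_cases h4 : i < k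
      · have h5 : i + 1 = k := by omega
        have := h2 i h4
        rw [h5, h1, ← g0] at this
        simpa [h4, h5] using this
      · have := g2 (i - k) (by omega)
        simp only [h3, h4, if_false]
        rwa [show i + 1 - k = i - k + 1 by omega]

lemma reachesIn_symm {α : Type*} {step : α → α → Prop} (hs : ∀ x y, step x y → step y x)
    {m : ℕ} {x y : α} (h : ReachesIn step m x y) : ReachesIn step m y x := by
  obtain ⟨k, hk, f, h0, h1, h2⟩ := h
  refine ⟨k, hk, fun i => f (k - i), by simpa using h1, by simpa using h0, ?_⟩
  intro i hi
  have := h2 (k - (i + 1)) (by omega)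
  rw [show k - (i + 1) + 1 = k - i by omega] at this
  exact hs _ _ this

lemma reachesIn_mono {α : Type*} {step : α → α → Prop} {m m' : ℕ} (hm : m ≤ m')
    {x y : α} (h : ReachesIn step m x y) : ReachesIn step m' x y := by
  obtain ⟨k, hk, h⟩ := h
  exact ⟨k, hk.trans hm, h⟩

lemma edgeSlide_symm (S : Finset Pt) (E F : Finset (Sym2 Pt)) (h : EdgeSlide S E F) :
    EdgeSlide S F E := by
  obtain ⟨h1, h2, p, q, r, h3, h4, h5, h6, h7⟩ := h
  refine ⟨h2, h1, p, r, q, h4, h3, ?_, ?_, ?_⟩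
  · rwa [Sym2.eq_swap]
  · rwa [Sym2.eq_swap]
  · intro g hg
    have := h7 g (by rwa [Finset.union_comm])
    unfold triInt at *
    rwa [Set.pair_comm r q]

/-! Graph part -/

lemma conn_replace {S : Finset Pt} {E F : Finset (Sym2 Pt)} {p q v : Pt}
    (hconn : ∀ a ∈ S, ∀ b ∈ S, Relation.ReflTransGen (fun a b => s(a, b) ∈ E) a b)
    (hpv : s(p, v) ∈ F) (hvq : s(v, q) ∈ F) (hsub : E.erase s(p, q) ⊆ F) :
    ∀ a ∈ S, ∀ b ∈ S, Relation.ReflTransGen (fun a b => s(a, b) ∈ F) a b := by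
  intro a ha b hb
  have := hconn a ha b hb
  have key : ∀ x y, s(x, y) ∈ E → Relation.ReflTransGen (fun a b => s(a, b) ∈ F) x y := ?_
  · clear ha hb
    induction this with
    | refl => exact Relation.ReflTransGen.refl
    | tail _ h ih => exact ih.trans (key _ _ h)
  intro x y hxy
  by_cases h : s(x, y) = s(p, q)
  · rw [Sym2.eq_iff] at h
    rcases h with ⟨rfl, rfl⟩ | ⟨rfl, rfl⟩
    · exact (Relation.ReflTransGen.single hpv).tail hvq
    · refine (Relation.ReflTransGen.single (b := v) ?_).tail ?_
      · rwa [Sym2.eq_swap]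
      · rwa [Sym2.eq_swap]
  · exact Relation.ReflTransGen.single (hsub (Finset.mem_erase.2 ⟨h, hxy⟩))

lemma card_le_of_conn {S : Finset Pt} {E : Finset (Sym2 Pt)} (hS : S.Nonempty)
    (hE : ∀ e ∈ E, ∀ p ∈ e, p ∈ S)
    (hconn : ∀ a ∈ S, ∀ b ∈ S, Relation.ReflTransGen (fun a b => s(a, b) ∈ E) a b) :
    S.card ≤ E.card + 1 := by
  let G : SimpleGraph S := SimpleGraph.fromRel (fun a b => s(a.1, b.1) ∈ E)
  have hreach : ∀ a b : Pt, ∀ ha : a ∈ S,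
      Relation.ReflTransGen (fun a b => s(a, b) ∈ E) a b → ∀ hb : b ∈ S,
      G.Reachable ⟨a, ha⟩ ⟨b, hb⟩ := by
    intro a b ha h
    induction h with
    | refl => intro _; exact SimpleGraph.Reachable.refl _
    | @tail c d h1 h2 ih =>
      intro hd
      have hc : c ∈ S := hE _ h2 c (by simp)
      refine (ih hc).trans ?_
      by_cases hcd : c = d
      · subst hcd; exact SimpleGraph.Reachable.refl _
      · refine SimpleGraph.Adj.reachable ?_
        rw [SimpleGraph.fromRel_adj]
        exact ⟨fun h => hcd (congrArg Subtype.val h), Or.inl h2⟩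
  haveI : Nonempty S := hS.to_subtype
  have hG : G.Connected := by
    refine ⟨fun a b => ?_⟩
    exact hreach a.1 b.1 a.2 (hconn _ a.2 _ b.2) b.2
  have h1 := hG.card_vert_le_card_edgeSet_add_one
  have h2 : Nat.card G.edgeSet ≤ E.card := by
    have hc : Nat.card (E : Set (Sym2 Pt)) = E.card := by simp
    rw [← hc]
    refine Nat.card_le_card_of_injective
      (fun e => (⟨Sym2.map Subtype.val e.1, ?_⟩ : (E : Set (Sym2 Pt)))) ?_
    · obtain ⟨e, he⟩ := e
      induction e using Sym2.ind with
      | _ x y =>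
        rw [SimpleGraph.mem_edgeSet, SimpleGraph.fromRel_adj] at he
        rcases he.2 with h | h
        · simpa using h
        · rw [Sym2.eq_swap] at h
          simpa using h
    · intro e f h
      have := congrArg Subtype.val h
      exact Subtype.ext (Sym2.map.injective Subtype.val_injective this)
  simp only [Nat.card_eq_fintype_card, Fintype.card_coe] at h1 h2
  omega

/-! Geometry part -/

def crs (x y : Pt) : ℝ := x.1 * y.2 - x.2 * y.1
def dt (x y : Pt) : ℝ := x.1 * y.1 + x.2 * y.2

lemma not_comb {S : Finset Pt} (hS : ConvexPos S) {a b c d : Pt} (ha : a ∈ S) (hb : b ∈ S)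
    (hc : c ∈ S) (hd : d ∈ S) (hab : a ≠ b) (hac : a ≠ c) (had : a ≠ d) {x y z : ℝ}
    (hx : 0 ≤ x) (hy : 0 ≤ y) (hz : 0 ≤ z) (hs : x + y + z = 1)
    (h : a = x • b + y • c + z • d) : False := by
  apply hS a ha
  have hconv := convex_convexHull ℝ ((S : Set Pt) \ {a})
  have hb' := subset_convexHull ℝ ((S : Set Pt) \ {a})
    (show b ∈ (S : Set Pt) \ {a} from ⟨hb, fun h => hab h.symm⟩)
  have hc' := subset_convexHull ℝ ((S : Set Pt) \ {a})
    (show c ∈ (S : Set Pt) \ {a} from ⟨hc, fun h => hac h.symm⟩)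
  have hd' := subset_convexHull ℝ ((S : Set Pt) \ {a})
    (show d ∈ (S : Set Pt) \ {a} from ⟨hd, fun h => had h.symm⟩)
  have := hconv.sum_mem (t := Finset.univ) (w := ![x, y, z]) (z := ![b, c, d])
    (by intro i _; fin_cases i <;> simpa) (by simpa [Fin.sum_univ_three] using hs)
    (by intro i _; fin_cases i <;> simpa)
  rw [Fin.sum_univ_three] at this
  simp only [Matrix.cons_val] at this
  rwa [← h] at this

lemma crs_ne {S : Finset Pt} (hS : ConvexPos S) {v q p : Pt} (hv : v ∈ S) (hq : q ∈ S)
    (hp : p ∈ S) (hvq : v ≠ q) (hvp : v ≠ p) (hqp : q ≠ p) : crs (v - q) (p - q) ≠ 0 := by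
  intro h
  have hN : 0 < dt (v - q) (v - q) := by
    have : 0 ≤ dt (v - q) (v - q) := by unfold dt; nlinarith [sq_nonneg (v-q).1, sq_nonneg (v-q).2]
    refine lt_of_le_of_ne this ?_
    intro h0
    apply hvq
    unfold dt at h0
    simp only [Prod.fst_sub, Prod.snd_sub] at h0
    ext
    · nlinarith [sq_nonneg (v.1-q.1), sq_nonneg (v.2-q.2)]
    · nlinarith [sq_nonneg (v.1-q.1), sq_nonneg (v.2-q.2)]
  obtain ⟨t, ht⟩ : ∃ t : ℝ, p = (1 - t) • q + t • v := by
    refine ⟨dt (p - q) (v - q) / dt (v - q) (v - q), ?_⟩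
    have h1 : crs (v - q) (p - q) = 0 := h
    ext
    · simp only [Prod.fst_add, Prod.smul_fst, smul_eq_mul]
      field_simp
      unfold crs at h1; unfold dt
      simp only [Prod.fst_sub, Prod.snd_sub] at *
      linear_combination (-(v.2 - q.2)) * h1
    · simp only [Prod.snd_add, Prod.smul_snd, smul_eq_mul]
      field_simp
      unfold crs at h1; unfold dt
      simp only [Prod.fst_sub, Prod.snd_sub] at *
      linear_combination ((v.1 - q.1)) * h1
  rcases le_total t 0 with h0 | h0
  · -- q between p and v
    refine not_comb hS hq hp hv hv hqp hvq.symm hvq.symm (x := 1 / (1 - t)) (y := -t / (1 - t))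
      (z := 0) ?_ ?_ le_rfl ?_ ?_
    · apply div_nonneg <;> linarith
    · apply div_nonneg <;> linarith
    · have : (1 - t) ≠ 0 := by linarith
      field_simp; ring
    · have : (1 - t) ≠ 0 := by linarith
      rw [ht]; ext <;> simp <;> field_simp <;> ring
  rcases le_total t 1 with h1 | h1
  · exact not_comb hS hp hq hv hv hqp.symm hvp.symm hvp.symm (x := 1 - t) (y := t)
      (z := 0) (by linarith) h0 le_rfl (by ring) (by rw [zero_smul, add_zero]; exact ht)
  · refine not_comb hS hv hp hq hq hvp hvq hvq (x := 1 / t) (y := (t - 1) / t)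
      (z := 0) ?_ ?_ le_rfl ?_ ?_
    · apply div_nonneg <;> linarith
    · apply div_nonneg <;> linarith
    · have : t ≠ 0 := by linarith
      field_simp; ring
    · have : t ≠ 0 := by linarith
      rw [ht]; ext <;> simp <;> field_simp <;> ring

/-- Barycentric coordinates. -/
structure Bary (v q p : Pt) where
  A : Pt → ℝ
  B : Pt → ℝ
  C : Pt → ℝ
  sum : ∀ z, A z + B z + C z = 1
  rep : ∀ z, z = A z • v + B z • q + C z • p
  uniq : ∀ a b c : ℝ, a + b + c = 1 → A (a • v + b • q + c • p) = a ∧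
    B (a • v + b • q + c • p) = b ∧ C (a • v + b • q + c • p) = c

lemma exists_bary {v q p : Pt} (h : crs (v - q) (p - q) ≠ 0) : Nonempty (Bary v q p) := by
  refine ⟨⟨fun z => crs (z - q) (p - q) / crs (v - q) (p - q),
    fun z => 1 - crs (z - q) (p - q) / crs (v - q) (p - q)
      - crs (v - q) (z - q) / crs (v - q) (p - q),
    fun z => crs (v - q) (z - q) / crs (v - q) (p - q), ?_, ?_, ?_⟩⟩
  · intro z; ring
  · intro z
    ext
    · simp only [Prod.fst_add, Prod.smul_fst, smul_eq_mul]
      field_simp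
      unfold crs; simp only [Prod.fst_sub, Prod.snd_sub]; ring
    · simp only [Prod.snd_add, Prod.smul_snd, smul_eq_mul]
      field_simp
      unfold crs; simp only [Prod.fst_sub, Prod.snd_sub]; ring
  · intro a b c hs
    obtain rfl : b = 1 - a - c := by linarith
    have h1 : crs (a • v + (1 - a - c) • q + c • p - q) (p - q) / crs (v - q) (p - q) = a := by
      rw [div_eq_iff h]; unfold crs; simp; ring
    have h2 : crs (v - q) (a • v + (1 - a - c) • q + c • p - q) / crs (v - q) (p - q) = c := by
      rw [div_eq_iff h]; unfold crs; simp; ring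
    simp only [h1, h2]
    simp

namespace Bary
variable {v q p : Pt} (β : Bary v q p)

def swap : Bary p q v where
  A := β.C
  B := β.B
  C := β.A
  sum z := by linarith [β.sum z]
  rep z := by
    rw [add_right_comm, add_comm (_ • p), add_right_comm, add_comm _ (_ • p)]
    have := β.rep z
    nth_rw 1 [this]
    abel
  uniq a b c h := by
    have h' := β.uniq c b a (by linarith)
    rw [show a • p + b • q + c • v = c • v + b • q + a • p by abel]
    exact ⟨h'.2.2, h'.2.1, h'.1⟩

lemma at_v : β.A v = 1 ∧ β.B v = 0 ∧ β.C v = 0 := by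
  simpa using β.uniq 1 0 0 (by norm_num)
lemma at_q : β.A q = 0 ∧ β.B q = 1 ∧ β.C q = 0 := by
  simpa using β.uniq 0 1 0 (by norm_num)
lemma at_p : β.A p = 0 ∧ β.B p = 0 ∧ β.C p = 1 := by
  simpa using β.uniq 0 0 1 (by norm_num)

lemma comb (x y : Pt) (s t : ℝ) (h : s + t = 1) :
    β.A (s • x + t • y) = s * β.A x + t * β.A y ∧
    β.B (s • x + t • y) = s * β.B x + t * β.B y ∧
    β.C (s • x + t • y) = s * β.C x + t * β.C y := by
  have := β.uniq (s * β.A x + t * β.A y) (s * β.B x + t * β.B y) (s * β.C x + t * β.C y)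
    (by linear_combination s * β.sum x + t * β.sum y + h)
  have e : s • x + t • y = (s * β.A x + t * β.A y) • v + (s * β.B x + t * β.B y) • q
      + (s * β.C x + t * β.C y) • p := by
    have hx := β.rep x
    have hy := β.rep y
    generalize β.A x = a1 at *
    generalize β.B x = a2 at *
    generalize β.C x = a3 at *
    generalize β.A y = b1 at *
    generalize β.B y = b2 at *
    generalize β.C y = b3 at *
    rw [hx, hy]
    module
  rw [e]
  exact this

/-- A point of `S` other than the triangle vertices has exactly one negative coordinate. -/
lemma sign {S : Finset Pt} (hS : ConvexPos S) (hv : v ∈ S) (hq : q ∈ S) (hp : p ∈ S)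
    {x : Pt} (hx : x ∈ S) (hxv : x ≠ v) (hxq : x ≠ q) (hxp : x ≠ p) (hvq : v ≠ q) (hvp : v ≠ p)
    (hqp : q ≠ p) :
    (β.A x < 0 ∧ 0 < β.B x ∧ 0 < β.C x) ∨ (0 < β.A x ∧ β.B x < 0 ∧ 0 < β.C x) ∨
    (0 < β.A x ∧ 0 < β.B x ∧ β.C x < 0) := by
  have hs := β.sum x
  have hr := β.rep x
  set a := β.A x
  set b := β.B x
  set c := β.C x
  have h0 : ¬ (0 ≤ a ∧ 0 ≤ b ∧ 0 ≤ c) := by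
    rintro ⟨ha, hb, hc⟩
    exact not_comb hS hx hv hq hp hxv hxq hxp ha hb hc hs hr
  have hA : ¬ (b ≤ 0 ∧ c ≤ 0) := by
    rintro ⟨hb, hc⟩
    have ha : 0 < a := by linarith
    refine not_comb hS hv hx hq hp hxv.symm hvq hvp (x := 1 / a) (y := -b / a) (z := -c / a)
      (div_nonneg (by linarith) ha.le) (div_nonneg (by linarith) ha.le)
      (div_nonneg (by linarith) ha.le) (by field_simp; linarith) ?_
    have : v = (1 / a) • (a • v) := by rw [smul_smul, one_div, inv_mul_cancel₀ ha.ne', one_smul]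
    have h2 : a • v = x - b • q - c • p := by rw [hr]; abel
    rw [this, h2]; module
  have hB : ¬ (a ≤ 0 ∧ c ≤ 0) := by
    rintro ⟨ha, hc⟩
    have hb : 0 < b := by linarith
    refine not_comb hS hq hx hv hp hxq.symm hvq.symm hqp (x := 1 / b) (y := -a / b) (z := -c / b)
      (div_nonneg (by linarith) hb.le) (div_nonneg (by linarith) hb.le)
      (div_nonneg (by linarith) hb.le) (by field_simp; linarith) ?_
    have : q = (1 / b) • (b • q) := by rw [smul_smul, one_div, inv_mul_cancel₀ hb.ne', one_smul]
    have h2 : b • q = x - a • v - c • p := by rw [hr]; abel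
    rw [this, h2]; module
  have hC : ¬ (a ≤ 0 ∧ b ≤ 0) := by
    rintro ⟨ha, hb⟩
    have hc : 0 < c := by linarith
    refine not_comb hS hp hx hv hq hxp.symm hvp.symm hqp.symm
      (x := 1 / c) (y := -a / c) (z := -b / c)
      (div_nonneg (by linarith) hc.le) (div_nonneg (by linarith) hc.le)
      (div_nonneg (by linarith) hc.le) (by field_simp; linarith) ?_
    have : p = (1 / c) • (c • p) := by rw [smul_smul, one_div, inv_mul_cancel₀ hc.ne', one_smul]
    have h2 : c • p = x - a • v - b • q := by rw [hr]; abel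
    rw [this, h2]; module
  clear_value a b c
  clear hr
  rcases lt_or_ge a 0 with ha | ha
  · left
    refine ⟨ha, ?_, ?_⟩ <;> by_contra! h
    · exact hC ⟨ha.le, h⟩
    · exact hB ⟨ha.le, h⟩
  rcases lt_or_ge b 0 with hb | hb
  · right; left
    refine ⟨?_, hb, ?_⟩ <;> by_contra! h
    · exact hC ⟨h, hb.le⟩
    · exact hA ⟨hb.le, h⟩
  · right; right
    have hc : c < 0 := by by_contra! h; exact h0 ⟨ha, hb, h⟩
    refine ⟨?_, ?_, hc⟩ <;> by_contra! h
    · exact hB ⟨h, hc.le⟩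
    · exact hA ⟨h, hc.le⟩

lemma hull_nonneg {z : Pt} (hz : z ∈ convexHull ℝ ({v, q, p} : Set Pt)) :
    0 ≤ β.A z ∧ 0 ≤ β.B z ∧ 0 ≤ β.C z := by
  have hconv : Convex ℝ {z | 0 ≤ β.A z ∧ 0 ≤ β.B z ∧ 0 ≤ β.C z} := by
    intro x hx y hy s t hs ht hst
    obtain ⟨h1, h2, h3⟩ := β.comb x y s t hst
    simp only [Set.mem_ofPred_eq] at *
    rw [h1, h2, h3]
    obtain ⟨a1, a2, a3⟩ := hx
    obtain ⟨b1, b2, b3⟩ := hy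
    refine ⟨?_, ?_, ?_⟩ <;> positivity
  refine convexHull_min ?_ hconv hz
  have h1 := β.at_v
  have h2 := β.at_q
  have h3 := β.at_p
  rintro x (rfl | rfl | rfl) <;> simp [*]

lemma interior_pos {z : Pt} (hz : z ∈ triInt p q v) : 0 < β.A z ∧ 0 < β.B z ∧ 0 < β.C z := by
  have hset : ({p, q, v} : Set Pt) = {v, q, p} := by
    ext x; simp only [Set.mem_insert_iff, Set.mem_singleton_iff]; tauto
  unfold triInt at hz
  rw [hset] at hz
  have key : ∀ w : Pt, ∃ ε : ℝ, 0 < ε ∧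
      (1 + ε) • z + (-ε) • w ∈ convexHull ℝ ({v, q, p} : Set Pt) := by
    intro w
    have hcont : Continuous (fun ε : ℝ => (1 + ε) • z + (-ε) • w) := by fun_prop
    have h0 : (fun ε : ℝ => (1 + ε) • z + (-ε) • w) 0 ∈
        interior (convexHull ℝ ({v, q, p} : Set Pt)) := by simpa using hz
    have hn := hcont.continuousAt.preimage_mem_nhds (isOpen_interior.mem_nhds h0)
    obtain ⟨δ, hδ, hball⟩ := Metric.mem_nhds_iff.1 hn
    refine ⟨δ / 2, by positivity, interior_subset (hball ?_)⟩
    rw [Metric.mem_ball, Real.dist_eq, sub_zero, abs_of_pos (by positivity)]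
    linarith
  refine ⟨?_, ?_, ?_⟩ <;> by_contra! h
  · obtain ⟨ε, he, hm⟩ := key v
    have := (β.hull_nonneg hm).1
    rw [(β.comb z v (1 + ε) (-ε) (by ring)).1, β.at_v.1] at this
    nlinarith
  · obtain ⟨ε, he, hm⟩ := key q
    have := (β.hull_nonneg hm).2.1
    rw [(β.comb z q (1 + ε) (-ε) (by ring)).2.1, β.at_q.2.1] at this
    nlinarith
  · obtain ⟨ε, he, hm⟩ := key p
    have := (β.hull_nonneg hm).2.2
    rw [(β.comb z p (1 + ε) (-ε) (by ring)).2.2, β.at_p.2.2] at this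
    nlinarith

/-- An edge that reaches the triangle from the far side of `qp` crosses `qp`. -/
lemma cross_A {x y z : Pt} (hx : β.A x < 0 ∧ 0 < β.B x ∧ 0 < β.C x)
    (hz : z ∈ segment ℝ x y) (hzA : 0 < β.A z) (hzB : 0 ≤ β.B z) (hzC : 0 < β.C z)
    (hnc : s(x, y) ≠ s(q, p) → NoCrossPair s(x, y) s(q, p)) : False := by
  have hne : s(x, y) ≠ s(q, p) := by
    intro h
    rw [Sym2.eq_iff] at h
    rcases h with ⟨rfl, -⟩ | ⟨rfl, -⟩
    · linarith [β.at_q.1, hx.1]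
    · linarith [β.at_p.1, hx.1]
  have hn := hnc hne
  -- the crossing point
  have hd : 0 < β.A z - β.A x := by linarith [hx.1]
  let s := β.A z / (β.A z - β.A x)
  let t := - β.A x / (β.A z - β.A x)
  have hs : 0 < s := by positivity
  have ht : 0 < t := div_pos (by linarith [hx.1]) hd
  have hst : s + t = 1 := by simp only [s, t]; field_simp; ring
  obtain ⟨h1, h2, h3⟩ := β.comb x z s t hst
  set u := s • x + t • z with hu
  have hA : β.A u = 0 := by
    rw [h1]; simp only [s, t]; field_simp; ring
  have hB : 0 < β.B u := by
    rw [h2]; have := mul_pos hs hx.2.1; have := mul_nonneg ht.le hzB; linarith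
  have hC : 0 < β.C u := by
    rw [h3]; have := mul_pos hs hx.2.2; have := mul_pos ht hzC; linarith
  have hu1 : u ∈ segOf s(x, y) :=
    (convex_segment x y) (left_mem_segment ℝ x y) hz hs.le ht.le hst
  have hu2 : u ∈ segOf s(q, p) := by
    refine ⟨β.B u, β.C u, hB.le, hC.le, by linarith [β.sum u], ?_⟩
    conv_rhs => rw [β.rep u, hA]
    simp
  have h4 : u ∈ epts s(q, p) := (hn ⟨hu1, hu2⟩).2
  have h5 : u = q ∨ u = p := by simpa [epts] using h4
  rcases h5 with h5 | h5
  · rw [h5, β.at_q.2.2] at hC; exact lt_irrefl _ hC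
  · rw [h5, β.at_p.2.1] at hB; exact lt_irrefl _ hB

end Bary

/-- Main geometric lemma. -/
lemma edge_avoids {S : Finset Pt} (hS : ConvexPos S) {E : Finset (Sym2 Pt)} (hE : IsPST S E)
    {v q p : Pt} (β : Bary v q p) (hv : v ∈ S) (hq : q ∈ S) (hp : p ∈ S)
    (hvq : v ≠ q) (hvp : v ≠ p) (hqp : q ≠ p)
    (e1 : s(v, q) ∈ E) (e2 : s(q, p) ∈ E) (e3 : s(p, v) ∉ E)
    (hmax : ∀ x, s(q, x) ∈ E → 0 < β.A x → β.B x < 0 → 0 < β.C x → False)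
    {g : Sym2 Pt} (hg : g ∈ E) {z : Pt} (hz : z ∈ segOf g)
    (hA : 0 < β.A z) (hB : 0 ≤ β.B z) (hC : 0 < β.C z) : False := by
  obtain ⟨hE1, hE2, -, -⟩ := hE
  -- classification of one endpoint
  have cls : ∀ x y : Pt, s(x, y) ∈ E → z ∈ segment ℝ x y →
      x = q ∨ x = v ∨ x = p ∨ (0 < β.A x ∧ β.B x < 0 ∧ 0 < β.C x) := by
    intro x y hxy hz
    by_contra! hcon
    obtain ⟨h1, h2, h3, h4⟩ := hcon
    have hx : x ∈ S := (hE1 _ hxy).2 x (by simp)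
    rcases β.sign hS hv hq hp hx h2 h1 h3 hvq hvp hqp with h | h | h
    · exact β.cross_A h hz hA hB hC (fun hne => hE2 _ hxy _ e2 hne)
    · exact absurd (h4 h.1 h.2.1) (not_le.2 h.2.2)
    · refine β.swap.cross_A (x := x) (y := y) (z := z) ⟨h.2.2, h.2.1, h.1⟩ hz hC hB hA
        (fun hne => hE2 _ hxy _ ?_ hne)
      rwa [Sym2.eq_swap]
  -- no endpoint is q
  have noq : ∀ y : Pt, s(q, y) ∈ E → z ∈ segment ℝ q y → False := by
    intro y hqy hz
    have hy := cls y q (by rwa [Sym2.eq_swap]) (by rwa [segment_symm])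
    obtain ⟨s, t, hs, ht, hst, rfl⟩ := hz
    obtain ⟨h1, h2, h3⟩ := β.comb q y s t hst
    rw [h1, β.at_q.1] at hA
    rw [h3, β.at_q.2.2] at hC
    rcases hy with rfl | rfl | rfl | h
    · simp [β.at_q] at hA
    · simp [β.at_v] at hC
    · simp [β.at_p] at hA
    · exact hmax y hqy h.1 h.2.1 h.2.2
  induction g using Sym2.ind with
  | _ x y =>
    have hz' : z ∈ segment ℝ x y := hz
    have hx := cls x y hg hz'
    have hyx : s(y, x) ∈ E := by rwa [Sym2.eq_swap]
    have hzs : z ∈ segment ℝ y x := by rwa [segment_symm]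
    have hy := cls y x hyx hzs
    have hxq : x ≠ q := by rintro rfl; exact noq y hg hz'
    have hyq : y ≠ q := by rintro rfl; exact noq x hyx hzs
    have hdiag : x ≠ y := by
      have := (hE1 _ hg).1
      simpa using this
    obtain ⟨s, t, hs, ht, hst, hzz⟩ := hz'
    obtain ⟨h1, h2, h3⟩ := β.comb x y s t hst
    rw [hzz] at h1 h2 h3
    rw [h1] at hA
    rw [h2] at hB
    rw [h3] at hC
    have av := β.at_v
    have ap := β.at_p
    rcases hx with hx | rfl | rfl | hx
    · exact hxq hx
    · rcases hy with hy | rfl | rfl | hy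
      · exact hyq hy
      · exact hdiag rfl
      · exact e3 hyx
      · simp only [av] at hA hB hC
        have : 0 < t := by
          rcases ht.lt_or_eq with h | h
          · exact h
          · subst h; simp at hC
        nlinarith [hy.2.1]
    · rcases hy with hy | rfl | rfl | hy
      · exact hyq hy
      · exact e3 hg
      · exact hdiag rfl
      · simp only [ap] at hA hB hC
        have : 0 < t := by
          rcases ht.lt_or_eq with h | h
          · exact h
          · subst h; simp at hA
        nlinarith [hy.2.1]
    · have hyB : β.B y ≤ 0 := by
        rcases hy with hy | rfl | rfl | hy
        · exact absurd hy hyq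
        · exact av.2.1.le
        · exact ap.2.1.le
        · exact hy.2.1.le
      have hs0 : s = 0 := by
        by_contra h
        have : 0 < s := lt_of_le_of_ne hs (Ne.symm h)
        nlinarith [hx.2.1, mul_neg_of_pos_of_neg this hx.2.1, mul_nonpos_of_nonneg_of_nonpos ht hyB]
      subst hs0
      have ht1 : t = 1 := by linarith
      subst ht1
      rcases hy with hy | rfl | rfl | hy
      · exact hyq hy
      · simp [av] at hC
      · simp [ap] at hA
      · linarith [hy.2.1]

lemma mem_seg_vertex {S : Finset Pt} (hS : ConvexPos S) {x y z : Pt} (hx : x ∈ S) (hy : y ∈ S)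
    (hz : z ∈ S) (h : z ∈ segment ℝ x y) : z = x ∨ z = y := by
  by_contra! hcon
  obtain ⟨s, t, hs, ht, hst, he⟩ := h
  exact not_comb hS hz hx hy hy hcon.1 hcon.2 hcon.2 hs ht le_rfl (by linarith)
    (by rw [zero_smul, add_zero]; exact he.symm)

def nonInc (E : Finset (Sym2 Pt)) (v : Pt) : ℕ := (E.filter (fun e => v ∉ e)).card

lemma step_lemma {S : Finset Pt} (hS : ConvexPos S) {E : Finset (Sym2 Pt)} (hE : IsPST S E)
    {v : Pt} (hv : v ∈ S) :
    E = starAt S v ∨ ∃ F, EdgeSlide S E F ∧ nonInc F v + 1 = nonInc E v := by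
  by_cases hall : ∀ w ∈ S, w ≠ v → s(v, w) ∈ E
  · left
    symm
    apply Finset.eq_of_subset_of_card_le
    · intro e he
      unfold starAt at he
      obtain ⟨w, hw, rfl⟩ := Finset.mem_image.1 he
      exact hall w (Finset.mem_of_mem_erase hw) (Finset.ne_of_mem_erase hw)
    · unfold starAt
      rw [Finset.card_image_of_injective _ (fun a b h => Sym2.congr_right.1 h),
        Finset.card_erase_of_mem hv]
      have := hE.2.2.1
      omega
  right
  push Not at hall
  obtain ⟨w, hw, hwv, hvw⟩ := hall
  have hEe := hE.1
  have hconn := hE.2.2.2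
  -- a vertex at distance two
  obtain ⟨q, p0, hvq, hqp0, hp0v⟩ : ∃ q p0, s(v, q) ∈ E ∧ s(q, p0) ∈ E ∧ p0 ≠ v := by
    by_contra! hcon
    have : ∀ x, Relation.ReflTransGen (fun a b => s(a, b) ∈ E) v x → x = v ∨ s(v, x) ∈ E := by
      intro x hx
      induction hx with
      | refl => left; rfl
      | @tail b c _ hbc ih =>
        rcases ih with rfl | ih
        · right; exact hbc
        · left; exact hcon b c ih hbc
    rcases this w (hconn v hv w hw) with h | h
    · exact hwv h
    · exact hvw h
  have hq : q ∈ S := (hEe _ hvq).2 q (by simp)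
  have hvq' : v ≠ q := by simpa using (hEe _ hvq).1
  -- choose p angularly closest to v
  let f : Pt → ℝ := fun x => dt (x - q) (v - q) / |crs (v - q) (x - q)|
  obtain ⟨p, hpm, hpmax⟩ := Finset.exists_max_image
    (S.filter (fun x => s(q, x) ∈ E ∧ x ≠ v)) f
    ⟨p0, Finset.mem_filter.2 ⟨(hEe _ hqp0).2 p0 (by simp), hqp0, hp0v⟩⟩
  obtain ⟨hp, hqp, hpv⟩ := Finset.mem_filter.1 hpm
  have hqp' : q ≠ p := by simpa using (hEe _ hqp).1
  have hpq : s(p, q) ∈ E := by rwa [Sym2.eq_swap]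
  have hne1 : s(v, q) ≠ s(p, q) := by
    intro h; rw [Sym2.eq_iff] at h
    rcases h with ⟨h, -⟩ | ⟨h, -⟩
    · exact hpv h.symm
    · exact hvq' h
  have hne2 : s(p, v) ≠ s(p, q) := by
    intro h; rw [Sym2.eq_iff] at h
    rcases h with ⟨-, h⟩ | ⟨h, -⟩
    · exact hvq' h
    · exact hqp' h.symm
  -- acyclicity
  have hpvE : s(p, v) ∉ E := by
    intro h
    have := card_le_of_conn (S := S) (E := E.erase s(p, q)) ⟨v, hv⟩
      (fun e he => (hEe e (Finset.mem_of_mem_erase he)).2)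
      (conn_replace hconn (Finset.mem_erase.2 ⟨hne2, h⟩) (Finset.mem_erase.2 ⟨hne1, hvq⟩)
        (Finset.Subset.refl _))
    rw [Finset.card_erase_of_mem hpq] at this
    have h1 := hE.2.2.1
    have h2 : 0 < E.card := Finset.card_pos.2 ⟨_, hpq⟩
    omega
  have hcr := crs_ne hS hv hq hp hvq' hpv.symm hqp'
  obtain ⟨β⟩ := exists_bary hcr
  have hmax : ∀ x, s(q, x) ∈ E → 0 < β.A x → β.B x < 0 → 0 < β.C x → False := by
    intro x hx hA hB hC
    have hxv : x ≠ v := by rintro rfl; linarith [β.at_v.2.1]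
    have hle := hpmax x (Finset.mem_filter.2 ⟨(hEe _ hx).2 x (by simp), hx, hxv⟩)
    have hr := β.rep x
    have hsum := β.sum x
    set a := β.A x
    set b := β.B x
    set c := β.C x
    clear_value a b c
    obtain rfl : b = 1 - a - c := by linarith
    have h1 : crs (v - q) (x - q) = c * crs (v - q) (p - q) := by
      rw [hr]; unfold crs; simp; ring
    have h2 : dt (x - q) (v - q) = a * dt (v - q) (v - q) + c * dt (p - q) (v - q) := by
      rw [hr]; unfold dt; simp; ring
    have hN : 0 < dt (v - q) (v - q) := by
      have h0 : 0 ≤ dt (v - q) (v - q) := by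
        unfold dt; nlinarith [sq_nonneg (v-q).1, sq_nonneg (v-q).2]
      refine lt_of_le_of_ne h0 ?_
      intro h0
      apply hvq'
      unfold dt at h0
      simp only [Prod.fst_sub, Prod.snd_sub] at h0
      ext
      · nlinarith [sq_nonneg (v.1-q.1), sq_nonneg (v.2-q.2)]
      · nlinarith [sq_nonneg (v.1-q.1), sq_nonneg (v.2-q.2)]
    have hK : 0 < |crs (v - q) (p - q)| := abs_pos.2 hcr
    simp only [f] at hle
    rw [h1, h2, abs_mul, abs_of_pos hC, div_le_div_iff₀ (by positivity) hK] at hle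
    have := mul_pos (mul_pos hA hN) hK
    nlinarith
  have havoid : ∀ g ∈ E, ∀ z ∈ segOf g, 0 < β.A z → 0 ≤ β.B z → 0 < β.C z → False :=
    fun g hg z hz h1 h2 h3 => edge_avoids hS hE β hv hq hp hvq' hpv.symm hqp' hvq hqp hpvE
      hmax hg hz h1 h2 h3
  have hB0 : ∀ z ∈ segOf s(p, v), β.B z = 0 ∧ 0 ≤ β.A z ∧ 0 ≤ β.C z ∧
      (β.A z = 0 → z = p) ∧ (β.C z = 0 → z = v) := by
    rintro z ⟨s, t, hs, ht, hst, rfl⟩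
    obtain ⟨h1, h2, h3⟩ := β.comb p v s t hst
    rw [h1, h2, h3]
    simp only [β.at_p, β.at_v]
    refine ⟨by ring, by linarith, by linarith, ?_, ?_⟩
    · intro h
      have h0 : t = 0 := by linarith
      have h1 : s = 1 := by linarith
      simp [h0, h1]
    · intro h
      have h0 : s = 0 := by linarith
      have h1 : t = 1 := by linarith
      simp [h0, h1]
  have hnew : ∀ g ∈ E, ∀ z, z ∈ segOf s(p, v) → z ∈ segOf g →
      z ∈ epts s(p, v) ∧ z ∈ epts g := by
    intro g hg z hz hzg
    obtain ⟨h1, h2, h3, h4, h5⟩ := hB0 z hz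
    have hz' : z = p ∨ z = v := by
      by_contra! hcon
      exact havoid g hg z hzg (lt_of_le_of_ne h2 (fun h => hcon.1 (h4 h.symm))) h1.ge
        (lt_of_le_of_ne h3 (fun h => hcon.2 (h5 h.symm)))
    have hzS : z ∈ S := by rcases hz' with rfl | rfl <;> assumption
    refine ⟨by simpa [epts] using hz', ?_⟩
    have hgS := (hEe g hg).2
    induction g using Sym2.ind with
    | _ x y =>
      have := mem_seg_vertex hS (hgS x (by simp)) (hgS y (by simp)) hzS hzg
      simpa [epts] using this
  let F := insert s(p, v) (E.erase s(p, q))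
  have hpvn : s(p, v) ∉ E.erase s(p, q) := fun h => hpvE (Finset.mem_of_mem_erase h)
  have hvqF : s(v, q) ∈ F := Finset.mem_insert_of_mem (Finset.mem_erase.2 ⟨hne1, hvq⟩)
  have hF : IsPST S F := by
    refine ⟨?_, ?_, ?_, ?_⟩
    · intro e he
      rcases Finset.mem_insert.1 he with rfl | he
      · refine ⟨by simpa using hpv, ?_⟩
        intro x hx
        rcases Sym2.mem_iff.1 hx with rfl | rfl <;> assumption
      · exact hEe e (Finset.mem_of_mem_erase he)
    · intro e he g hg heg
      rcases Finset.mem_insert.1 he with rfl | he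
      · rcases Finset.mem_insert.1 hg with rfl | hg
        · exact absurd rfl heg
        · rintro z ⟨h1, h2⟩
          exact hnew g (Finset.mem_of_mem_erase hg) z h1 h2
      · rcases Finset.mem_insert.1 hg with rfl | hg
        · rintro z ⟨h1, h2⟩
          exact (hnew e (Finset.mem_of_mem_erase he) z h2 h1).symm
        · exact hE.2.1 e (Finset.mem_of_mem_erase he) g (Finset.mem_of_mem_erase hg) heg
    · rw [Finset.card_insert_of_notMem hpvn, Finset.card_erase_of_mem hpq]
      have h1 := hE.2.2.1
      have h2 : 0 < E.card := Finset.card_pos.2 ⟨_, hpq⟩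
      omega
    · exact conn_replace hconn (Finset.mem_insert_self _ _) hvqF (Finset.subset_insert _ _)
  refine ⟨F, ⟨hE, hF, p, q, v, ?_, ?_, ?_, ?_, ?_⟩, ?_⟩
  · ext e
    simp only [F, Finset.mem_sdiff, Finset.mem_insert, Finset.mem_erase, Finset.mem_singleton]
    constructor
    · rintro ⟨h1, h2⟩; by_contra h; exact h2 (Or.inr ⟨h, h1⟩)
    · rintro rfl
      refine ⟨hpq, ?_⟩
      rintro (h | h)
      · exact hne2 h.symm
      · exact h.1 rfl
  · ext e
    simp only [F, Finset.mem_sdiff, Finset.mem_insert, Finset.mem_erase, Finset.mem_singleton]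
    constructor
    · rintro ⟨h1 | h1, h2⟩
      · exact h1
      · exact absurd h1.2 h2
    · rintro rfl
      exact ⟨Or.inl rfl, hpvE⟩
  · rwa [Sym2.eq_swap]
  · rw [Sym2.eq_swap]; exact hvqF
  · intro g hg
    rw [Set.disjoint_left]
    intro z hz hzi
    obtain ⟨h1, h2, h3⟩ := β.interior_pos hzi
    have hg' : g ∈ E ∨ g = s(p, v) := by
      rcases Finset.mem_union.1 hg with h | h
      · exact Or.inl h
      · rcases Finset.mem_insert.1 h with h | h
        · exact Or.inr h
        · exact Or.inl (Finset.mem_of_mem_erase h)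
    rcases hg' with hg' | rfl
    · exact havoid g hg' z hz h1 h2.le h3
    · exact h2.ne' (hB0 z hz).1
  · unfold nonInc
    simp only [F]
    rw [Finset.filter_insert, if_neg (by simp), Finset.filter_erase,
      Finset.card_erase_of_mem]
    · have : 0 < (E.filter (fun e => v ∉ e)).card :=
        Finset.card_pos.2 ⟨s(p, q), Finset.mem_filter.2 ⟨hpq, by simp [hvq', hpv.symm]⟩⟩
      omega
    · exact Finset.mem_filter.2 ⟨hpq, by simp [hvq', hpv.symm]⟩

lemma to_star {S : Finset Pt} (hS : ConvexPos S) {v : Pt} (hv : v ∈ S) :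
    ∀ (k : ℕ) (E : Finset (Sym2 Pt)), IsPST S E → nonInc E v = k →
      ReachesIn (EdgeSlide S) k E (starAt S v) := by
  intro k
  induction k with
  | zero =>
    intro E hE hk
    rcases step_lemma hS hE hv with rfl | ⟨F, hF, h⟩
    · exact reachesIn_refl _ _
    · omega
  | succ k ih =>
    intro E hE hk
    rcases step_lemma hS hE hv with rfl | ⟨F, hF, h⟩
    · exact reachesIn_refl _ _
    · exact reachesIn_cons hF (ih F hF.2.1 (by omega))

lemma sum_nonInc {S : Finset Pt} {E : Finset (Sym2 Pt)} (hE : IsPST S E) :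
    ∑ v ∈ S, nonInc E v = (S.card - 1) * (S.card - 2) := by
  unfold nonInc
  have h := Finset.sum_card_bipartiteAbove_eq_sum_card_bipartiteBelow
    (s := S) (t := E) (fun v e => v ∉ e)
  unfold Finset.bipartiteAbove Finset.bipartiteBelow at h
  rw [h]
  have : ∀ e ∈ E, (S.filter (fun v => v ∉ e)).card = S.card - 2 := by
    intro e he
    obtain ⟨h1, h2⟩ := hE.1 e he
    induction e using Sym2.ind with
    | _ x y =>
      have hxy : x ≠ y := by simpa using h1
      have : S.filter (fun v => v ∉ s(x, y)) = S \ {x, y} := by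
        ext z; simp
      rw [this, Finset.card_sdiff_of_subset, Finset.card_pair hxy]
      intro z hz
      apply h2
      simpa using hz
  rw [Finset.sum_congr rfl this, Finset.sum_const, smul_eq_mul, ← hE.2.2.1]
  simp

end Helpers

/-- on `n` points in convex position, any two trees are connected by at most
`2n - 5` edge slides. -/
theorem stmt_8 :
    ∀ S : Finset Pt, ConvexPos S →
      ∀ E E' : Finset (Sym2 Pt), IsPST S E → IsPST S E' →
        ReachesIn (EdgeSlide S) (2 * S.card - 5) E E' := by
  intro S hS E E' hE hE'
  have hn : S.Nonempty := Finset.card_pos.1 (by have := hE.2.2.1; omega)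
  obtain ⟨v, hv, hle⟩ : ∃ v ∈ S, nonInc E v + nonInc E' v ≤ 2 * S.card - 5 := by
    by_contra! hcon
    have hsum : ∑ v ∈ S, (nonInc E v + nonInc E' v) = 2 * ((S.card - 1) * (S.card - 2)) := by
      rw [Finset.sum_add_distrib, sum_nonInc hE, sum_nonInc hE']; ring
    have hge : S.card * (2 * S.card - 5 + 1) ≤ ∑ v ∈ S, (nonInc E v + nonInc E' v) := by
      rw [← smul_eq_mul, ← Finset.sum_const]
      exact Finset.sum_le_sum (fun v hv => hcon v hv)
    rw [hsum] at hge
    have hpos : 0 < S.card := Finset.card_pos.2 hn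
    generalize S.card = n at *
    rcases Nat.lt_or_ge n 3 with h | h
    · interval_cases n <;> simp at hge
    · obtain ⟨m, rfl⟩ := Nat.exists_eq_add_of_le h
      rw [show 2 * (3 + m) - 5 + 1 = 2 * m + 2 by omega, show 3 + m - 1 = m + 2 by omega,
        show 3 + m - 2 = m + 1 by omega] at hge
      nlinarith
  exact reachesIn_mono hle (reachesIn_trans (to_star hS hv _ E hE rfl)
    (reachesIn_symm (edgeSlide_symm S) (to_star hS hv _ E' hE' rfl)))
end
end

section
/- There exists a constant c > 0 such that for every integer n ≥ 3 there exist a set S of n points in the plane in general position and two trees T₁, T₂ ∈ 𝒯(S) such that every sequence of simultaneous edge slides transforming T₁ into T₂ has length at least c·n. -/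
open scoped Classical

noncomputable section

def bp (i : ℕ) : Pt := ((i : ℝ), (i : ℝ) ^ 2)

def ap (M : ℕ) : Pt := (0, -((M : ℝ) + 1) ^ 2)

def SS (M : ℕ) : Finset Pt := insert (ap M) ((Finset.range (M + 1)).image bp)

def EE (M m : ℕ) : Finset (Sym2 Pt) :=
  insert s(ap M, bp m) ((Finset.range M).image (fun i => s(bp i, bp (i + 1))))

lemma bp_inj {i j : ℕ} (h : bp i = bp j) : i = j := by
  have := congrArg Prod.fst h
  simpa [bp] using this

lemma ap_ne_bp (M i : ℕ) : ap M ≠ bp i := by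
  intro h
  have := congrArg Prod.snd h
  simp only [ap, bp] at this
  have h1 : (0 : ℝ) < ((M : ℝ) + 1) ^ 2 := by positivity
  have h2 : (0 : ℝ) ≤ (i : ℝ) ^ 2 := by positivity
  linarith

lemma mem_SS {M : ℕ} {p : Pt} : p ∈ SS M ↔ p = ap M ∨ ∃ i ≤ M, p = bp i := by
  simp only [SS, Finset.mem_insert, Finset.mem_image, Finset.mem_range, Nat.lt_succ_iff]
  constructor
  · rintro (h | ⟨i, hi, rfl⟩)
    · exact Or.inl h
    · exact Or.inr ⟨i, hi, rfl⟩
  · rintro (h | ⟨i, hi, rfl⟩)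
    · exact Or.inl h
    · exact Or.inr ⟨i, hi, rfl⟩

lemma card_SS (M : ℕ) : (SS M).card = M + 2 := by
  rw [SS, Finset.card_insert_of_notMem, Finset.card_image_of_injective, Finset.card_range]
  · intro i j h; exact bp_inj h
  · simp only [Finset.mem_image, not_exists, not_and]
    intro i _ h
    exact ap_ne_bp M i h.symm

lemma mem_EE {M m : ℕ} {e : Sym2 Pt} :
    e ∈ EE M m ↔ e = s(ap M, bp m) ∨ ∃ i < M, e = s(bp i, bp (i + 1)) := by
  simp only [EE, Finset.mem_insert, Finset.mem_image, Finset.mem_range, eq_comm]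

lemma card_EE (M m : ℕ) : (EE M m).card = M + 1 := by
  rw [EE, Finset.card_insert_of_notMem, Finset.card_image_of_injective, Finset.card_range]
  · intro i j h
    simp only [Sym2.eq_iff] at h
    rcases h with h | h
    · exact bp_inj h.1
    · have := bp_inj h.1
      have := bp_inj h.2
      omega
  · simp only [Finset.mem_image, not_exists, not_and]
    intro i _ h
    simp only [Sym2.eq_iff] at h
    rcases h with h | h
    · exact ap_ne_bp _ _ h.1.symm
    · exact ap_ne_bp _ _ h.2.symm

def dd (p q r : Pt) : ℝ := (q.1 - p.1) * (r.2 - p.2) - (r.1 - p.1) * (q.2 - p.2)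

lemma dd_zero_of_collinear {p q r : Pt} (h : Collinear ℝ ({p, q, r} : Set Pt)) :
    dd p q r = 0 := by
  rw [collinear_iff_of_mem (p₀ := p) (by simp)] at h
  obtain ⟨v, hv⟩ := h
  obtain ⟨s, hs⟩ := hv q (by simp)
  obtain ⟨t, ht⟩ := hv r (by simp)
  subst hs ht
  simp [dd]
  ring

lemma dd_bbb (i j k : ℕ) : dd (bp i) (bp j) (bp k) =
    ((j : ℝ) - i) * ((k : ℝ) - i) * ((k : ℝ) - j) := by
  simp [dd, bp]; ring

lemma dd_abb (M i j : ℕ) : dd (ap M) (bp i) (bp j) =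
    ((j : ℝ) - i) * ((i : ℝ) * j - ((M : ℝ) + 1) ^ 2) := by
  simp [dd, bp, ap]; ring

lemma dd_rot (p q r : Pt) : dd p q r = dd q r p := by simp [dd]; ring

lemma prod_lt {M i j : ℕ} (hi : i ≤ M) (hj : j ≤ M) : (i : ℝ) * j < ((M : ℝ) + 1) ^ 2 := by
  have : i * j < (M + 1) ^ 2 := by nlinarith
  exact_mod_cast this

lemma dd_bbb_ne {i j k : ℕ} (h1 : i ≠ j) (h2 : i ≠ k) (h3 : j ≠ k) :
    dd (bp i) (bp j) (bp k) ≠ 0 := by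
  rw [dd_bbb]
  refine mul_ne_zero (mul_ne_zero ?_ ?_) ?_ <;> rw [sub_ne_zero] <;> norm_cast <;> omega

lemma dd_abb_ne {M i j : ℕ} (hi : i ≤ M) (hj : j ≤ M) (h1 : i ≠ j) :
    dd (ap M) (bp i) (bp j) ≠ 0 := by
  rw [dd_abb]
  refine mul_ne_zero ?_ ?_
  · rw [sub_ne_zero]; norm_cast; omega
  · have := prod_lt hi hj
    linarith

lemma genPos_SS (M : ℕ) : GenPos (SS M) := by
  intro p hp q hq r hr hpq hpr hqr hc
  have h := dd_zero_of_collinear hc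
  rw [mem_SS] at hp hq hr
  rcases hp with rfl | ⟨i, hi, rfl⟩ <;> rcases hq with rfl | ⟨j, hj, rfl⟩ <;>
    rcases hr with rfl | ⟨k, hk, rfl⟩
  · exact hpq rfl
  · exact hpq rfl
  · exact hpr rfl
  · exact dd_abb_ne hj hk (fun e => hqr (by rw [e])) h
  · exact hqr rfl
  · rw [dd_rot] at h
    exact dd_abb_ne hk hi (fun e => hpr (by rw [e])) h
  · rw [dd_rot, dd_rot] at h
    exact dd_abb_ne hi hj (fun e => hpq (by rw [e])) h
  · exact dd_bbb_ne (fun e => hpq (by rw [e])) (fun e => hpr (by rw [e]))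
      (fun e => hqr (by rw [e])) h

lemma NoCrossPair.symm {e f : Sym2 Pt} (h : NoCrossPair e f) : NoCrossPair f e := by
  intro x hx
  have := h ⟨hx.2, hx.1⟩
  exact ⟨this.2, this.1⟩

lemma nc_path {i j : ℕ} (hij : i < j) :
    NoCrossPair s(bp i, bp (i + 1)) s(bp j, bp (j + 1)) := by
  rintro x ⟨hx, hy⟩
  obtain ⟨u, v, hu, hv, huv, rfl⟩ := (show x ∈ segment ℝ (bp i) (bp (i + 1)) from hx)
  obtain ⟨s, t, hs, ht, hst, he⟩ :=
    (show _ ∈ segment ℝ (bp j) (bp (j + 1)) from hy)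
  have h1 := congrArg Prod.fst he
  simp [bp] at h1
  have hij' : (i : ℝ) + 1 ≤ j := by exact_mod_cast hij
  have e1 : s * (j : ℝ) + t * (j + 1) = j + t := by
    rw [← eq_sub_iff_add_eq] at hst; subst hst; ring
  have e2 : u * (i : ℝ) + v * (i + 1) = i + v := by
    rw [← eq_sub_iff_add_eq] at huv; subst huv; ring
  rw [e1, e2] at h1
  have hv1 : v = 1 := by linarith
  have hu0 : u = 0 := by linarith
  have hj : j = i + 1 := by
    have : (j : ℝ) ≤ (i : ℝ) + 1 := by linarith
    have : j ≤ i + 1 := by exact_mod_cast this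
    omega
  subst hj hv1 hu0
  simp [epts]

lemma nc_rung {M m i : ℕ} (hm : m ≤ M) (hi : i < M) :
    NoCrossPair s(ap M, bp m) s(bp i, bp (i + 1)) := by
  rintro x ⟨hx, hy⟩
  obtain ⟨s, t, hs, ht, hst, he⟩ := (show x ∈ segment ℝ (ap M) (bp m) from hx)
  obtain ⟨u, v, hu, hv, huv, rfl⟩ := (show x ∈ segment ℝ (bp i) (bp (i + 1)) from hy)
  have key : u * dd (ap M) (bp m) (bp i) + v * dd (ap M) (bp m) (bp (i + 1)) = 0 := by
    have h1 := congrArg Prod.fst he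
    have h2 := congrArg Prod.snd he
    simp [bp, ap] at h1 h2
    simp [dd, bp, ap]
    rw [← eq_sub_iff_add_eq] at huv hst; subst huv hst
    linear_combination (-(m : ℝ)) * h2 + ((m : ℝ) ^ 2 + ((M : ℝ) + 1) ^ 2) * h1
  rw [dd_abb, dd_abb] at key
  have p1 := prod_lt hm hi.le
  have p2 := prod_lt hm (Nat.succ_le_of_lt hi)
  rw [Nat.succ_eq_add_one] at p2
  set K := ((M : ℝ) + 1) ^ 2
  rcases le_or_gt m i with h | h
  · have h' : (m : ℝ) ≤ i := by exact_mod_cast h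
    have k1 : 0 ≤ u * (((i : ℝ) - m) * (K - m * i)) :=
      mul_nonneg hu (mul_nonneg (by linarith) (by linarith))
    have k2 : 0 < (((i + 1 : ℕ) : ℝ) - m) * (K - m * ((i + 1 : ℕ) : ℝ)) :=
      mul_pos (by push_cast; linarith) (by linarith)
    have k3 : v = 0 := by
      have : 0 ≤ v * ((((i + 1 : ℕ) : ℝ) - m) * (K - m * ((i + 1 : ℕ) : ℝ))) :=
        mul_nonneg hv k2.le
      have h0 : v * ((((i + 1 : ℕ) : ℝ) - m) * (K - m * ((i + 1 : ℕ) : ℝ))) = 0 := by linarith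
      exact (mul_eq_zero.1 h0).resolve_right k2.ne'
    have k4 : u = 1 := by linarith
    subst k3 k4
    have : ((i : ℝ) - m) * (m * i - K) = 0 := by linarith
    have : (i : ℝ) - m = 0 := (mul_eq_zero.1 this).resolve_right (by linarith)
    have : i = m := by
      have : (i : ℝ) = m := by linarith
      exact_mod_cast this
    subst this
    simp [epts]
  · have h' : ((i + 1 : ℕ) : ℝ) ≤ m := by exact_mod_cast h
    have k1 : 0 ≤ v * (((m : ℝ) - (i + 1 : ℕ)) * (K - m * (i + 1 : ℕ))) :=
      mul_nonneg hv (mul_nonneg (by linarith) (by linarith))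
    have k2 : 0 < ((m : ℝ) - i) * (K - m * (i : ℝ)) :=
      mul_pos (by push_cast at h'; linarith) (by linarith)
    have k3 : u = 0 := by
      have : 0 ≤ u * (((m : ℝ) - i) * (K - m * (i : ℝ))) :=
        mul_nonneg hu k2.le
      have h0 : u * (((m : ℝ) - i) * (K - m * (i : ℝ))) = 0 := by linarith
      exact (mul_eq_zero.1 h0).resolve_right k2.ne'
    have k4 : v = 1 := by linarith
    subst k3 k4
    have : (((i + 1 : ℕ) : ℝ) - m) * (m * (i + 1 : ℕ) - K) = 0 := by linarith
    have : ((i + 1 : ℕ) : ℝ) - m = 0 := (mul_eq_zero.1 this).resolve_right (by linarith)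
    have : i + 1 = m := by
      have : ((i + 1 : ℕ) : ℝ) = m := by linarith
      exact_mod_cast this
    subst this
    simp [epts]

lemma noCross_EE {M m : ℕ} (hm : m ≤ M) : NoCross (EE M m) := by
  intro e he f hf hef
  rw [mem_EE] at he hf
  rcases he with rfl | ⟨i, hi, rfl⟩ <;> rcases hf with rfl | ⟨j, hj, rfl⟩
  · exact absurd rfl hef
  · exact nc_rung hm hj
  · exact (nc_rung hm hi).symm
  · rcases lt_trichotomy i j with h | h | h
    · exact nc_path h
    · subst h; exact absurd rfl hef
    · exact (nc_path h).symm

lemma isPST_EE {M m : ℕ} (hm : m ≤ M) : IsPST (SS M) (EE M m) := by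
  refine ⟨?_, noCross_EE hm, by rw [card_EE, card_SS], ?_⟩
  · intro e he
    rw [mem_EE] at he
    rcases he with rfl | ⟨i, hi, rfl⟩
    · refine ⟨by simpa using ap_ne_bp M m, ?_⟩
      intro p hp
      rw [Sym2.mem_iff] at hp
      rw [mem_SS]
      rcases hp with rfl | rfl
      · exact Or.inl rfl
      · exact Or.inr ⟨m, hm, rfl⟩
    · refine ⟨?_, ?_⟩
      · intro h
        have := bp_inj (Sym2.mk_isDiag_iff.1 h)
        omega
      intro p hp
      rw [Sym2.mem_iff] at hp
      rw [mem_SS]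
      rcases hp with rfl | rfl
      · exact Or.inr ⟨i, hi.le, rfl⟩
      · exact Or.inr ⟨i + 1, hi, rfl⟩
  · have hsymm : Std.Symm (fun a b => s(a, b) ∈ EE M m) :=
      ⟨fun a b h => by rwa [Sym2.eq_swap]⟩
    have hb : ∀ i ≤ M, Relation.ReflTransGen (fun a b => s(a, b) ∈ EE M m) (bp 0) (bp i) := by
      intro i
      induction i with
      | zero => intro _; exact Relation.ReflTransGen.refl
      | succ i ih =>
        intro h
        exact (ih (by omega)).tail (mem_EE.2 (Or.inr ⟨i, h, rfl⟩))
    have hall : ∀ p ∈ SS M, Relation.ReflTransGen (fun a b => s(a, b) ∈ EE M m) (bp 0) p := by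
      intro p hp
      rw [mem_SS] at hp
      rcases hp with rfl | ⟨i, hi, rfl⟩
      · refine (hb m hm).tail (mem_EE.2 (Or.inl ?_))
        exact Sym2.eq_swap
      · exact hb i hi
    intro p hp q hq
    have h1 : Relation.ReflTransGen (fun a b => s(a, b) ∈ EE M m) p (bp 0) :=
      (Relation.ReflTransGen.stdSymm (r := fun a b => s(a, b) ∈ EE M m)).symm _ _ (hall p hp)
    exact h1.trans (hall q hq)

lemma mem_triInt {p q r x : Pt} (h1 : 0 < dd p q x) (h2 : 0 < dd q r x) (h3 : 0 < dd r p x) :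
    x ∈ triInt p q r := by
  have hsub : {y : Pt | 0 < dd p q y ∧ 0 < dd q r y ∧ 0 < dd r p y} ⊆
      convexHull ℝ ({p, q, r} : Set Pt) := by
    rintro y ⟨a1, a2, a3⟩
    have hD : 0 < dd p q y + dd q r y + dd r p y := by linarith
    set D := dd p q y + dd q r y + dd r p y with hDdef
    have hy : y = (dd q r y / D) • p + (dd r p y / D) • q + (dd p q y / D) • r := by
      ext
      · simp only [Prod.fst_add, Prod.smul_fst, smul_eq_mul]
        field_simp
        rw [hDdef]; simp only [dd]; ring
      · simp only [Prod.snd_add, Prod.smul_snd, smul_eq_mul]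
        field_simp
        rw [hDdef]; simp only [dd]; ring
    have hs : dd q r y / D + dd r p y / D + dd p q y / D = 1 := by
      field_simp
      rw [hDdef]; ring
    rw [hy]
    have := (convex_convexHull ℝ ({p, q, r} : Set Pt)).sum_mem (t := Finset.univ)
      (w := ![dd q r y / D, dd r p y / D, dd p q y / D]) (z := ![p, q, r])
      (by intro i _; fin_cases i <;> simp <;> positivity)
      (by simpa [Fin.sum_univ_three] using hs)
      (by intro i _; apply subset_convexHull; fin_cases i <;> simp)
    simpa [Fin.sum_univ_three] using this
  refine interior_maximal hsub ?_ ⟨h1, h2, h3⟩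
  have c : ∀ p q : Pt, Continuous (fun y => dd p q y) := by
    intro p q; unfold dd; fun_prop
  exact ((isOpen_lt continuous_const (c p q)).inter
    ((isOpen_lt continuous_const (c q r)).inter (isOpen_lt continuous_const (c r p))))

lemma inside {M i k j : ℕ} (hik : i < k) (hkj : k < j) (hj : j ≤ M) :
    bp k ∈ triInt (ap M) (bp j) (bp i) := by
  have a : (i : ℝ) < k := by exact_mod_cast hik
  have b : (k : ℝ) < j := by exact_mod_cast hkj
  apply mem_triInt
  · rw [dd_abb]
    have := prod_lt hj (show k ≤ M by omega)
    nlinarith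
  · rw [dd_bbb]
    have : 0 < ((j : ℝ) - i) * (j - k) * (k - i) :=
      mul_pos (mul_pos (by linarith) (by linarith)) (by linarith)
    linarith
  · rw [dd_rot, dd_abb]
    have := prod_lt (show k ≤ M by omega) (show i ≤ M by omega)
    nlinarith

lemma triInt_congr {p q r p' q' r' : Pt} (h : ({p, q, r} : Set Pt) = {p', q', r'}) :
    triInt p q r = triInt p' q' r' := by
  unfold triInt; rw [h]

lemma exists_edge {M k : ℕ} {E : Finset (Sym2 Pt)} (hE : IsPST (SS M) E) (hk : k ≤ M) :
    ∃ g ∈ E, bp k ∈ segOf g := by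
  have h := hE.2.2.2 (bp k) (mem_SS.2 (Or.inr ⟨k, hk, rfl⟩)) (ap M) (mem_SS.2 (Or.inl rfl))
  rcases Relation.ReflTransGen.cases_head h with h | ⟨c, hc, _⟩
  · exact absurd h.symm (ap_ne_bp M k)
  · exact ⟨_, hc, left_mem_segment ℝ _ _⟩

lemma step_bound {M t j : ℕ} {E F : Finset (Sym2 Pt)} (h : SimEdgeSlide (SS M) E F)
    (ht : ∀ l ≤ M, s(ap M, bp l) ∈ E → l ≤ t) (hj : j ≤ M) (hF : s(ap M, bp j) ∈ F) :
    j ≤ t + 1 := by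
  obtain ⟨hE, hF', π, hπ, hs⟩ := h
  by_cases hmem : s(ap M, bp j) ∈ E
  · have := ht j hj hmem
    omega
  obtain ⟨e, he, hpe⟩ := hπ.surjOn (show s(ap M, bp j) ∈ (↑(F \ E) : Set (Sym2 Pt)) by
    simp [hF, hmem])
  have he' : e ∈ E \ F := by simpa using he
  obtain ⟨p, q, r, h1, h2, h3, h4, h5⟩ := hs e he'
  have heE : s(p, q) ∈ E := h1 ▸ (Finset.mem_sdiff.1 he').1
  have hq : q ∈ SS M := (hE.1 _ heE).2 q (by simp)
  have hpq : p ≠ q := by simpa using (hE.1 _ heE).1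
  have hqr : q ≠ r := by simpa using (hE.1 _ h3).1
  rw [hpe] at h2
  by_contra hcon
  have main : ∀ l ≤ M, s(ap M, bp l) ∈ E → triInt p q r = triInt (ap M) (bp j) (bp l) → False := by
    intro l hl hlE htri
    have hlt := ht l hl hlE
    obtain ⟨g, hg, hgs⟩ := exists_edge hE (show l + 1 ≤ M by omega)
    have hd := h5 g (Finset.mem_union_left _ hg)
    rw [htri] at hd
    exact Set.disjoint_left.1 hd hgs (inside (by omega) (by omega) hj)
  rw [mem_SS] at hq
  rcases Sym2.eq_iff.1 h2 with ⟨rfl, rfl⟩ | ⟨rfl, rfl⟩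
  · rcases hq with rfl | ⟨l, hl, rfl⟩
    · exact hpq rfl
    · refine main l hl heE (triInt_congr ?_)
      ext z; simp; tauto
  · rcases hq with rfl | ⟨l, hl, rfl⟩
    · exact hqr rfl
    · refine main l hl (by rwa [Sym2.eq_swap]) (triInt_congr ?_)
      ext z; simp; tauto

/-- there are `n`-point sets in general position with two trees at simultaneous
edge slide distance `Ω(n)`. -/
theorem stmt_10 :
    ∃ c : ℝ, 0 < c ∧ ∀ n : ℕ, 3 ≤ n →
      ∃ S : Finset Pt, S.card = n ∧ GenPos S ∧
        ∃ E₁ E₂ : Finset (Sym2 Pt), IsPST S E₁ ∧ IsPST S E₂ ∧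
          ∀ (k : ℕ) (f : ℕ → Finset (Sym2 Pt)), f 0 = E₁ → f k = E₂ →
            (∀ i < k, SimEdgeSlide S (f i) (f (i + 1))) → c * (n : ℝ) ≤ (k : ℝ) := by
  refine ⟨1 / 3, by norm_num, ?_⟩
  intro n hn
  obtain ⟨M, rfl⟩ : ∃ M, n = M + 2 := ⟨n - 2, by omega⟩
  refine ⟨SS M, card_SS M, genPos_SS M, EE M 0, EE M M, isPST_EE (Nat.zero_le _),
    isPST_EE le_rfl, ?_⟩
  intro k f h0 hk hstep
  have key : ∀ t ≤ k, ∀ l ≤ M, s(ap M, bp l) ∈ f t → l ≤ t := by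
    intro t
    induction t with
    | zero =>
      intro _ l hl hmem
      rw [h0, mem_EE] at hmem
      rcases hmem with h | ⟨i, _, h⟩
      · rcases Sym2.eq_iff.1 h with h | h
        · exact (bp_inj h.2).le
        · exact absurd h.1 (ap_ne_bp _ _)
      · rcases Sym2.eq_iff.1 h with h | h
        · exact absurd h.1 (ap_ne_bp _ _)
        · exact absurd h.1 (ap_ne_bp _ _)
    | succ t ih =>
      intro ht l hl hmem
      exact step_bound (hstep t (by omega)) (ih (by omega)) hl hmem
  have hM : M ≤ k := key k le_rfl M le_rfl (by rw [hk, mem_EE]; exact Or.inl rfl)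
  have h1 : (M : ℝ) ≤ k := by exact_mod_cast hM
  have h2 : (1 : ℝ) ≤ M := by
    have : 1 ≤ M := by omega
    exact_mod_cast this
  push_cast
  linarith
end
end
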